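/- arXiv:2008.00215 — 2 statements merged into one kernel-verified Lean document; each statement's English description precedes it below -/
import Mathlib

section
/- Over F_23, the 7×7 lower triangular Toeplitz matrix with first column (1, 1, 4, 19, 6, 4, 8) is LT-superregular. -/
/-!
The claim is a finite one. Lifting the entries to `ℤ`, each relevant minor is the reduction mod 23
of an integer determinant, so it suffices that 23 divides none of these integers. A `k × k`
submatrix is given by two strictly increasing lists of length `k` in `Fin 7`, i.e. by two sublists
of `List.finRange 7`, and those satisfying the diagonal condition are 1430 in number (a Catalan
number). Their determinants are computed by a list version of cofactor expansion, `laplace`, which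
is identified with `Matrix.det` in `det_submatrix_eq_laplace`; the resulting check
`laplace_intToeplitz_not_dvd` is small enough to be evaluated by the kernel.
-/

/-- A matrix is LT-superregular if every square submatrix (given by strictly
increasing row and column indices) whose diagonal entries all lie in the lower
triangular part (row index ≥ column index) has nonzero determinant. -/
def LTSuperregular {n : ℕ} {R : Type*} [CommRing R] (A : Matrix (Fin n) (Fin n) R) : Prop :=
  ∀ (k : ℕ) (r c : Fin k → Fin n), StrictMono r → StrictMono c →
    (∀ i, (c i : ℕ) ≤ (r i : ℕ)) → (A.submatrix r c).det ≠ 0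

/-- The n×n lower triangular Toeplitz matrix whose first column is a 0, a 1, ... ;
its (i,j) entry is `a (i - j)` when i ≥ j and 0 otherwise. -/
def ltToeplitz (n : ℕ) {R : Type*} [CommRing R] (a : ℕ → R) : Matrix (Fin n) (Fin n) R :=
  Matrix.of fun i j => if (j : ℕ) ≤ (i : ℕ) then a ((i : ℕ) - (j : ℕ)) else 0

/-- The minor of `A` with the listed rows and columns, computed by cofactor expansion along the
first listed row; meaningful when the two lists have the same length. Positions `j` stay below
`cs.length`, so the default value behind `cs[j]!` never enters. The test for a zero entry changes no value; it avoids evaluating the cofactors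
of zero entries. -/
def laplace {m n : Type*} [Inhabited n] (A : Matrix m n ℤ) : List m → List n → ℤ
  | [], _ => 1
  | r :: rs, cs => ((List.range cs.length).map fun j =>
      if A r cs[j]! = 0 then (0 : ℤ)
      else (-1) ^ j * A r cs[j]! * laplace A rs (cs.eraseIdx j)).sum

/-- Deleting an entry of the list of values of `f` is skipping its index with `Fin.succAbove`. -/
lemma eraseIdx_ofFn_eq_ofFn_succAbove {α : Type*} {k : ℕ} (f : Fin (k + 1) → α)
    (j : Fin (k + 1)) :
    (List.ofFn f).eraseIdx j = List.ofFn fun i => f (j.succAbove i) := by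
  apply List.ext_getElem
  · simp [List.length_eraseIdx, j.is_le]
  · intro i h₁ h₂
    rw [List.getElem_eraseIdx]
    simp only [List.getElem_ofFn, Fin.succAbove, Fin.lt_def]
    split_ifs <;> simp_all

lemma det_submatrix_eq_laplace {m n : Type*} [Inhabited n] (A : Matrix m n ℤ) :
    ∀ (k : ℕ) (r : Fin k → m) (c : Fin k → n),
      (A.submatrix r c).det = laplace A (List.ofFn r) (List.ofFn c)
  | 0, r, c => by simp [laplace]
  | k + 1, r, c => by
    rw [Matrix.det_succ_row_zero, List.ofFn_succ, laplace, List.length_ofFn,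
      ← List.sum_toFinset _ List.nodup_range, List.toFinset_range, Finset.sum_range]
    refine Finset.sum_congr rfl fun j _ => ?_
    have hj : (List.ofFn c)[(j : ℕ)]! = c j := by
      simp [-List.ofFn_succ, Nat.le_of_lt_succ j.isLt]
    rw [hj, eraseIdx_ofFn_eq_ofFn_succAbove, ← det_submatrix_eq_laplace A k]
    simp only [Matrix.submatrix_apply, Matrix.submatrix_submatrix]
    split_ifs with h
    · simp [h]
    · rfl

/-- The integer lift of the Toeplitz matrix over `ZMod 23`. -/
def intToeplitz : Matrix (Fin 7) (Fin 7) ℤ :=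
  ltToeplitz 7 fun k => [1, 1, 4, 19, 6, 4, 8].getD k 0

lemma map_intToeplitz : (Int.castRingHom (ZMod 23)).mapMatrix intToeplitz =
    ltToeplitz 7 (fun k => [1, 1, 4, 19, 6, 4, 8].getD k (0 : ZMod 23)) := by
  decide +kernel

/-- The exhaustive check. Every entry above the diagonal vanishes, so most cofactors are skipped
and the expansions stay far below their factorial worst case. -/
lemma laplace_intToeplitz_not_dvd : ∀ k < 8, ∀ rs ∈ (List.finRange 7).sublistsLen k,
    ∀ cs ∈ (List.finRange 7).sublistsLen k,
      List.Forall₂ (· ≤ ·) cs rs → ¬ (23 : ℤ) ∣ laplace intToeplitz rs cs := by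
  decide +kernel

lemma ofFn_mem_sublistsLen {n k : ℕ} {f : Fin k → Fin n} (hf : StrictMono f) :
    List.ofFn f ∈ (List.finRange n).sublistsLen k := by
  rw [List.mem_sublistsLen]
  refine ⟨List.sublist_of_subperm_of_sortedLE ?_ hf.sortedLT_ofFn.sortedLE ?_, by simp⟩
  · exact List.subperm_of_subset hf.sortedLT_ofFn.nodup fun x _ => List.mem_finRange x
  · exact (List.sortedLT_finRange n).sortedLE

theorem stmt_15 :
    LTSuperregular (ltToeplitz 7 (fun k => [1, 1, 4, 19, 6, 4, 8].getD k (0 : ZMod 23))) := by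
  intro k r c hr hc hle hdet
  have hk : k < 8 := by
    have := Fintype.card_le_of_injective r hr.injective
    simp only [Fintype.card_fin] at this
    omega
  refine laplace_intToeplitz_not_dvd k hk _ (ofFn_mem_sublistsLen hr) _
    (ofFn_mem_sublistsLen hc) ?_ ?_
  · rw [List.forall₂_iff_get]
    refine ⟨by simp, fun i h₁ h₂ => ?_⟩
    simpa using hle ⟨i, by simpa using h₁⟩
  · rw [← det_submatrix_eq_laplace, ← Nat.cast_ofNat, ← ZMod.intCast_zmod_eq_zero_iff_dvd]
    rw [← map_intToeplitz] at hdet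
    rw [← hdet, ← eq_intCast (Int.castRingHom (ZMod 23)), RingHom.map_det]
    rfl
end

section
/- Over F_31, the 8×8 lower triangular Toeplitz matrix with first column (1, 1, 7, 22, 20, 2, 13, 5) is LT-superregular. -/
/-- The entry in row `r` and column `c` of the Toeplitz matrix, lifted to `ℕ`. -/
def natEntry (r c : ℕ) : ℕ := [1, 1, 7, 22, 20, 2, 13, 5].getD (r - c) 0

/-- Laplace expansion along the first row, lifted to `ℕ`: the sign `(-1) ^ j` becomes `30 ^ j`, and
entries above the diagonal are skipped, so that the cofactors they multiply are never evaluated. -/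
def natDet : List ℕ → List ℕ → ℕ
  | [], _ => 1
  | r :: rs, cs => ((List.range cs.length).map fun j =>
      bif Nat.ble (cs.getD j 0) r then
        30 ^ j * natEntry r (cs.getD j 0) * natDet rs (cs.eraseIdx j) else 0).sum

/-- Entrywise `c ≤ r`, that is, the diagonal of the submatrix lies in the lower triangular part. Only
used for lists of equal length. -/
def diagLower : List ℕ → List ℕ → Bool
  | r :: rs, c :: cs => Nat.ble c r && diagLower rs cs
  | _, _ => true

/-- The full finite computation: every minor whose diagonal lies in the lower triangular part is
nonzero modulo 31. -/
def checkAll : Bool :=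
  (List.range 9).all fun k =>
    (List.sublistsLen k (List.range 8)).all fun R =>
      (List.sublistsLen k (List.range 8)).all fun C =>
        bif diagLower R C then !(Nat.beq (natDet R C % 31) 0) else true

set_option maxRecDepth 100000 in
theorem checkAll_eq_true : checkAll = true := by decide +kernel

theorem natEntry_cast (r c : ℕ) :
    ((natEntry r c : ℕ) : ZMod 31) =
      [1, 1, 7, 22, 20, 2, 13, 5].getD (r - c) (0 : ZMod 31) := by
  unfold natEntry
  generalize r - c = d
  rcases d with _ | _ | _ | _ | _ | _ | _ | _ | d <;> simp

theorem eraseIdx_ofFn_succAbove {k : ℕ} (c : Fin (k + 1) → ℕ) (j : Fin (k + 1)) :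
    (List.ofFn c).eraseIdx j = List.ofFn (fun i => c (j.succAbove i)) := by
  apply List.ext_getElem
  · simp [List.length_eraseIdx, Nat.lt_succ_iff.1 j.is_lt]
  · intro i h1 h2
    rw [List.getElem_eraseIdx]
    simp only [List.getElem_ofFn, Fin.succAbove, Fin.lt_def, Fin.val_castSucc]
    split_ifs <;> rfl

/-- Modulo 31 the lifted expansion `natDet` is the determinant of the submatrix, because `30 = -1` and
`Matrix.det_succ_row_zero` is the same recursion. -/
theorem natDet_cast {k : ℕ} (r c : Fin k → Fin 8) :
    ((natDet (List.ofFn fun i => (r i : ℕ)) (List.ofFn fun i => (c i : ℕ)) : ℕ) : ZMod 31) =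
      ((ltToeplitz 8 (fun k => [1, 1, 7, 22, 20, 2, 13, 5].getD k (0 : ZMod 31))).submatrix
        r c).det := by
  induction k with
  | zero => simp [natDet]
  | succ k ih =>
    have hsum (g : ℕ → ℕ) : ((List.range (k + 1)).map g).sum = ∑ j : Fin (k + 1), g j :=
      Finset.sum_range g
    rw [Matrix.det_succ_row_zero, List.ofFn_succ, natDet, List.length_ofFn, hsum, Nat.cast_sum]
    refine Finset.sum_congr rfl fun j _ => ?_
    have hget : (List.ofFn fun i => (c i : ℕ)).getD j 0 = c j := by
      rw [List.getD_eq_getElem _ _ (by rw [List.length_ofFn]; exact j.is_lt), List.getElem_ofFn]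
    have hneg : ((30 : ℕ) : ZMod 31) = -1 := by decide
    rw [hget, eraseIdx_ofFn_succAbove, Matrix.submatrix_submatrix]
    by_cases h : (c j : ℕ) ≤ r 0
    · rw [Nat.ble_eq_true_of_le h, cond_true, Nat.cast_mul, Nat.cast_mul, Nat.cast_pow, hneg,
        natEntry_cast, ih (fun i => r i.succ) (fun i => c (j.succAbove i))]
      simp only [Matrix.submatrix_apply, ltToeplitz, Matrix.of_apply, if_pos h]
      rfl
    · have hb : Nat.ble (c j) (r 0) = false := by
        rw [← Bool.not_eq_true, Nat.ble_eq]; exact h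
      rw [hb, cond_false, Nat.cast_zero, Matrix.submatrix_apply, ltToeplitz, Matrix.of_apply,
        if_neg h, mul_zero, zero_mul]

theorem ofFn_mem_sublistsLen_s16 {k : ℕ} {r : Fin k → Fin 8} (hr : StrictMono r) :
    (List.ofFn fun i => (r i : ℕ)) ∈ List.sublistsLen k (List.range 8) := by
  have hlt : (List.ofFn fun i => (r i : ℕ)).Pairwise (· < ·) :=
    List.pairwise_ofFn.2 fun i j hij => hr hij
  refine List.mem_sublistsLen.2 ⟨?_, by simp⟩
  refine List.sublist_of_subperm_of_pairwise (r := (· < ·)) ?_ hlt List.pairwise_lt_range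
  refine List.subperm_of_subset (hlt.imp fun h => h.ne) ?_
  intro x hx
  obtain ⟨i, rfl⟩ := (List.mem_ofFn' _ _).1 hx
  simp

theorem diagLower_ofFn {k : ℕ} (r c : Fin k → ℕ) (h : ∀ i, c i ≤ r i) :
    diagLower (List.ofFn r) (List.ofFn c) = true := by
  induction k with
  | zero => simp [diagLower]
  | succ k ih =>
    rw [List.ofFn_succ, List.ofFn_succ, diagLower, ih _ _ fun i => h i.succ]
    simpa using h 0

theorem stmt_16 :
    LTSuperregular (ltToeplitz 8 (fun k => [1, 1, 7, 22, 20, 2, 13, 5].getD k (0 : ZMod 31))) := by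
  intro k r c hr hc hrc
  have hk : k ≤ 8 := by simpa using Fintype.card_le_of_injective r hr.injective
  have h := checkAll_eq_true
  simp only [checkAll, List.all_eq_true] at h
  have h2 := h k (List.mem_range.2 (by omega)) _ (ofFn_mem_sublistsLen_s16 hr) _
    (ofFn_mem_sublistsLen_s16 hc)
  rw [diagLower_ofFn _ _ hrc, cond_true] at h2
  rw [← natDet_cast, Ne, ZMod.natCast_eq_zero_iff, Nat.dvd_iff_mod_eq_zero]
  intro h0
  simp [h0] at h2
end
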